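/- There exists a constant C > 0, depending only on n, κ1 and C₀, such that for every x = (x', x_n) ∈ Ω₁ and all tangential indices α, β ∈ {1,…,n−1}: |∂_α∂_β ū(x)| ≤ C/(ε + |x'|²); |∂_α∂_n ū(x)| ≤ C·|x'|/(ε + |x'|²)²; and ∂_n∂_n ū(x) = 0. -/

import Mathlib

/-!
Write `δ = ε + h1 - h2` for the gap and `t = x_n - h2 + ε/2`, so that `ū = t / δ` with `0 < t < δ`
in `Ω₁`.  The quotient rule gives `∂_n ū = 1/δ`, hence `∂_n ∂_n ū = 0` and
`∂_α ∂_n ū = -∂_α δ / δ²`, together with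
`∂_α ∂_β ū = -∂_αβ h2 / δ + (∂_β h2 ∂_α δ + ∂_α h2 ∂_β δ) / δ² - t ∂_αβ δ / δ² + 2 t ∂_α δ ∂_β δ / δ³`
(`fderiv_fderiv_ubar_apply`).

The Hessians of the `h_i` are bounded by their `C²`-norms (`norm_hess_le`), and since the gradients
vanish at the origin the mean value inequality gives `|∇h_i(x')| ≤ ‖h_i‖_{C²} |x'|`
(`norm_grad_le`).  With `|x'|² ≤ ε + |x'|² ≤ C₀ δ` every term of the tangential derivative is
`O(1/δ)`, and the mixed one is `O(|x'|/δ²)` (`tangential_bound`, `mixed_bound`).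

The `C²`-norm is a real supremum over the closed ball of full Fréchet derivatives, which may be junk
on the unit sphere; `C2norm_bddAbove` shows that it is nevertheless a supremum of a bounded family.
-/

open MeasureTheory Metric Finset

noncomputable section

/-- `ℝ^{n-1}`, the horizontal (tangential) variables `x'`. -/
abbrev Ep (n : ℕ) := EuclideanSpace ℝ (Fin (n - 1))

/-- `ℝ^n = ℝ^{n-1} × ℝ`, points written `x = (x', x_n)`. -/
abbrev Efull (n : ℕ) := Ep n × ℝ

/-- The narrow region `Ω_r`. -/
def Omega (n : ℕ) (ε : ℝ) (h1 h2 : Ep n → ℝ) (r : ℝ) : Set (Efull n) :=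
  {x | ‖x.1‖ < r ∧ -ε/2 + h2 x.1 < x.2 ∧ x.2 < ε/2 + h1 x.1}

/-- Top boundary `Γ_r⁺`. -/
def Gammap (n : ℕ) (ε : ℝ) (h1 : Ep n → ℝ) (r : ℝ) : Set (Efull n) :=
  {x | ‖x.1‖ ≤ r ∧ x.2 = ε/2 + h1 x.1}

/-- Bottom boundary `Γ_r⁻`. -/
def Gammam (n : ℕ) (ε : ℝ) (h2 : Ep n → ℝ) (r : ℝ) : Set (Efull n) :=
  {x | ‖x.1‖ ≤ r ∧ x.2 = -ε/2 + h2 x.1}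

/-- `Ω̂_s(x₀) = {x ∈ Ω_{1/2} : |x' - x₀'| < s}`. -/
def OmegaHat (n : ℕ) (ε : ℝ) (h1 h2 : Ep n → ℝ) (x0 : Efull n) (s : ℝ) : Set (Efull n) :=
  {x | x ∈ Omega n ε h1 h2 (1/2) ∧ ‖x.1 - x0.1‖ < s}

/-- The `n` coordinate directions of `ℝ^{n-1} × ℝ`: the first `n-1` are the horizontal
Euclidean basis vectors, the last is the vertical direction. -/
def dir (n : ℕ) (α : Fin n) : Efull n :=
  if h : (α : ℕ) < n - 1 then (EuclideanSpace.single (⟨(α : ℕ), h⟩ : Fin (n - 1)) 1, (0:ℝ))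
  else (0, 1)

/-- Tangential direction `e_α` for `α ∈ {1, …, n-1}`. -/
def tang (n : ℕ) (α : Fin (n - 1)) : Efull n := (EuclideanSpace.single α 1, (0:ℝ))

/-- Vertical direction `e_n`. -/
def vert (n : ℕ) : Efull n := (0, 1)

/-- Pointwise Laplacian `Δu = Σ_α ∂_α∂_α u`. -/
def lapl (n : ℕ) (u : Efull n → ℝ) (x : Efull n) : ℝ :=
  ∑ α : Fin n, fderiv ℝ (fun y => fderiv ℝ u y (dir n α)) x (dir n α)

/-- The auxiliary function `ū(x', x_n) = (x_n - h2(x') + ε/2)/(ε + h1(x') - h2(x'))`. -/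
def ubar (n : ℕ) (ε : ℝ) (h1 h2 : Ep n → ℝ) (x : Efull n) : ℝ :=
  (x.2 - h2 x.1 + ε/2) / (ε + h1 x.1 - h2 x.1)

/-- The auxiliary function `ũ = φ(x')·ū + ψ(x')·(1 - ū)`. -/
def util (n : ℕ) (ε : ℝ) (h1 h2 φ ψ : Ep n → ℝ) (x : Efull n) : ℝ :=
  φ x.1 * ubar n ε h1 h2 x + ψ x.1 * (1 - ubar n ε h1 h2 x)

/-- `C²`-norm on the closed unit ball: `sup_{|x'| ≤ 1} (|f| + |∇f| + |∇²f|)`. -/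
def C2norm {F : Type*} [NormedAddCommGroup F] [NormedSpace ℝ F] (n : ℕ)
    (f : Ep n → F) : ℝ :=
  ⨆ y : closedBall (0 : Ep n) 1,
    (‖f (y : Ep n)‖ + ‖fderiv ℝ f (y : Ep n)‖ + ‖fderiv ℝ (fderiv ℝ f) (y : Ep n)‖)

/-- `C²(S)`-norm of a function on `ℝ^n`. -/
def C2normOn (n : ℕ) (S : Set (Efull n)) (f : Efull n → ℝ) : ℝ :=
  ⨆ y : S,
    (‖f (y : Efull n)‖ + ‖fderiv ℝ f (y : Efull n)‖ + ‖fderiv ℝ (fderiv ℝ f) (y : Efull n)‖)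

/-- `‖∇f‖_∞ = sup_{|x'| ≤ 1} |∇f(x')|`. -/
def gradSup {F : Type*} [NormedAddCommGroup F] [NormedSpace ℝ F] (n : ℕ) (f : Ep n → F) : ℝ :=
  ⨆ y : closedBall (0 : Ep n) 1, ‖fderiv ℝ f (y : Ep n)‖

/-- `‖∇²f‖_∞ = sup_{|x'| ≤ 1} |∇²f(x')|`. -/
def hessSup {F : Type*} [NormedAddCommGroup F] [NormedSpace ℝ F] (n : ℕ) (f : Ep n → F) : ℝ :=
  ⨆ y : closedBall (0 : Ep n) 1, ‖fderiv ℝ (fderiv ℝ f) (y : Ep n)‖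

/-- The geometric hypotheses on `h1, h2`: `C²` on the closed unit ball, the two graphs
do not touch, flatness at the origin, strict convexity of the gap, and `C²`-bound `κ1`. -/
def HGeom (n : ℕ) (ε κ0 κ1 : ℝ) (h1 h2 : Ep n → ℝ) : Prop :=
  ContDiffOn ℝ 2 h1 (closedBall 0 1) ∧ ContDiffOn ℝ 2 h2 (closedBall 0 1) ∧
  (∀ y : Ep n, ‖y‖ ≤ 1 → -ε/2 + h2 y < ε/2 + h1 y) ∧
  h1 0 = 0 ∧ h2 0 = 0 ∧ fderiv ℝ h1 0 = 0 ∧ fderiv ℝ h2 0 = 0 ∧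
  (∀ v : Ep n, κ0 * ‖v‖^2 ≤ fderiv ℝ (fderiv ℝ (fun y => h1 y - h2 y)) 0 v v) ∧
  C2norm n h1 + C2norm n h2 ≤ κ1

/-- Comparability `(ε + |x'|²)/C₀ ≤ δ(x') ≤ C₀ (ε + |x'|²)`. -/
def DeltaComp (n : ℕ) (ε C₀ : ℝ) (h1 h2 : Ep n → ℝ) : Prop :=
  ∀ y : Ep n, ‖y‖ ≤ 1 →
    (ε + ‖y‖^2) / C₀ ≤ ε + h1 y - h2 y ∧ ε + h1 y - h2 y ≤ C₀ * (ε + ‖y‖^2)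

/-- Hypotheses on the coefficients: `C²`-regularity with total `C²(Ω₁)`-norm at most `κ2`,
boundedness `|A| ≤ Λ`, and the weak ellipticity (Legendre) condition with constant `λ`. -/
def CoeffHyp (n N : ℕ) (ε lam Lam κ2 : ℝ) (h1 h2 : Ep n → ℝ)
    (A : Fin n → Fin n → Fin N → Fin N → Efull n → ℝ)
    (B : Fin n → Fin N → Fin N → Efull n → ℝ)
    (Cc : Fin n → Fin N → Fin N → Efull n → ℝ)
    (Dc : Fin N → Fin N → Efull n → ℝ) : Prop :=
  (∀ α β i j, ContDiffOn ℝ 2 (A α β i j) (Omega n ε h1 h2 1)) ∧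
  (∀ α i j, ContDiffOn ℝ 2 (B α i j) (Omega n ε h1 h2 1)) ∧
  (∀ β i j, ContDiffOn ℝ 2 (Cc β i j) (Omega n ε h1 h2 1)) ∧
  (∀ i j, ContDiffOn ℝ 2 (Dc i j) (Omega n ε h1 h2 1)) ∧
  ((∑ α : Fin n, ∑ β : Fin n, ∑ i : Fin N, ∑ j : Fin N,
      C2normOn n (Omega n ε h1 h2 1) (A α β i j)) +
   (∑ α : Fin n, ∑ i : Fin N, ∑ j : Fin N, C2normOn n (Omega n ε h1 h2 1) (B α i j)) +
   (∑ β : Fin n, ∑ i : Fin N, ∑ j : Fin N, C2normOn n (Omega n ε h1 h2 1) (Cc β i j)) +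
   (∑ i : Fin N, ∑ j : Fin N, C2normOn n (Omega n ε h1 h2 1) (Dc i j)) ≤ κ2) ∧
  (∀ α β i j, ∀ x ∈ Omega n ε h1 h2 1, |A α β i j x| ≤ Lam) ∧
  (∀ ξ : Efull n → EuclideanSpace ℝ (Fin N), ContDiff ℝ (⊤ : ℕ∞) ξ →
    HasCompactSupport ξ → tsupport ξ ⊆ Omega n ε h1 h2 1 →
    lam * ∫ x in Omega n ε h1 h2 1, ‖fderiv ℝ ξ x‖^2 ≤
      ∫ x in Omega n ε h1 h2 1,
        ∑ α : Fin n, ∑ β : Fin n, ∑ i : Fin N, ∑ j : Fin N,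
          A α β i j x * fderiv ℝ ξ x (dir n α) i * fderiv ℝ ξ x (dir n β) j)

/-- `u` is a weak solution of
`∂_α(A^{αβ}_{ij} ∂_β u^j + B^α_{ij} u^j) + C^β_{ij} ∂_β u^j + D_{ij} u^j = 0` in `Ω₁`. -/
def WeakSol (n N : ℕ) (ε : ℝ) (h1 h2 : Ep n → ℝ)
    (A : Fin n → Fin n → Fin N → Fin N → Efull n → ℝ)
    (B : Fin n → Fin N → Fin N → Efull n → ℝ)
    (Cc : Fin n → Fin N → Fin N → Efull n → ℝ)
    (Dc : Fin N → Fin N → Efull n → ℝ)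
    (u : Efull n → EuclideanSpace ℝ (Fin N)) : Prop :=
  ContDiffOn ℝ 1 u (Omega n ε h1 h2 1) ∧
  IntegrableOn (fun x => ‖u x‖^2 + ‖fderiv ℝ u x‖^2) (Omega n ε h1 h2 1) ∧
  ∀ ζ : Efull n → EuclideanSpace ℝ (Fin N), ContDiff ℝ (⊤ : ℕ∞) ζ →
    HasCompactSupport ζ → tsupport ζ ⊆ Omega n ε h1 h2 1 →
    (∫ x in Omega n ε h1 h2 1,
      ((∑ α : Fin n, ∑ i : Fin N,
          ((∑ β : Fin n, ∑ j : Fin N, A α β i j x * fderiv ℝ u x (dir n β) j) +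
            ∑ j : Fin N, B α i j x * u x j) * fderiv ℝ ζ x (dir n α) i) -
        ∑ i : Fin N,
          ((∑ β : Fin n, ∑ j : Fin N, Cc β i j x * fderiv ℝ u x (dir n β) j) +
            ∑ j : Fin N, Dc i j x * u x j) * ζ x i)) = 0

/-- `u` attains the boundary values `(φ, ψ)` on `Γ₁⁺` and `Γ₁⁻`. -/
def AttainsBV {F : Type*} [NormedAddCommGroup F] [NormedSpace ℝ F] (n : ℕ) (ε : ℝ)
    (h1 h2 : Ep n → ℝ) (u : Efull n → F) (φ ψ : Ep n → F) : Prop :=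
  ContinuousOn u (Omega n ε h1 h2 1 ∪ Gammap n ε h1 1 ∪ Gammam n ε h2 1) ∧
  (∀ y : Ep n, ‖y‖ ≤ 1 → u (y, ε/2 + h1 y) = φ y ∧ u (y, -ε/2 + h2 y) = ψ y)

/-- `u` is a harmonic function on `Ω₁` with boundary values `φ` on `Γ₁⁺` and `ψ` on `Γ₁⁻`. -/
def HarmBV (n : ℕ) (ε : ℝ) (h1 h2 : Ep n → ℝ) (u : Efull n → ℝ) (φ ψ : Ep n → ℝ) : Prop :=
  ContDiffOn ℝ 2 u (Omega n ε h1 h2 1) ∧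
  (∀ x ∈ Omega n ε h1 h2 1, lapl n u x = 0) ∧
  IntegrableOn (fun x => ‖u x‖^2 + ‖fderiv ℝ u x‖^2) (Omega n ε h1 h2 1) ∧
  AttainsBV n ε h1 h2 u φ ψ

/-! ### Bounds on the graph functions from their `C²`-norms -/

/-- For `f` of class `C²` on the closed unit ball, the function whose supremum defines `C2norm` is
bounded, so that the supremum is a genuine one.  At a point of the unit sphere the full derivatives
`fderiv` either take the junk value `0` or agree with the derivatives within the ball, which are
continuous on a compact set. -/
lemma C2norm_bddAbove (n : ℕ) (f : Ep n → ℝ) (hf : ContDiffOn ℝ 2 f (closedBall 0 1)) :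
    BddAbove (Set.range fun y : closedBall (0 : Ep n) 1 =>
      (‖f (y : Ep n)‖ + ‖fderiv ℝ f (y : Ep n)‖ + ‖fderiv ℝ (fderiv ℝ f) (y : Ep n)‖)) := by
  set K : Set (Ep n) := closedBall 0 1 with hK
  have hKc : IsCompact K := isCompact_closedBall 0 1
  have hballne : (interior (ball (0 : Ep n) 1)).Nonempty := by
    rw [isOpen_ball.interior_eq]; exact ⟨0, by simp⟩
  have hKu : UniqueDiffOn ℝ K := by
    refine uniqueDiffOn_convex (convex_closedBall 0 1) ?_
    exact hballne.mono (interior_mono ball_subset_closedBall)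
  have hBu : ∀ y ∈ K, UniqueDiffWithinAt ℝ (ball (0 : Ep n) 1) y := by
    intro y hy
    refine uniqueDiffWithinAt_convex (convex_ball 0 1) hballne ?_
    rw [closure_ball _ one_ne_zero]; exact hy
  set G := fderivWithin ℝ f K with hG
  have hG1 : ContDiffOn ℝ 1 G K := hf.fderivWithin hKu (by norm_num)
  have hG2 : ContinuousOn (fderivWithin ℝ G K) K := hG1.continuousOn_fderivWithin hKu (by norm_num)
  obtain ⟨M0, hM0⟩ := hKc.exists_bound_of_continuousOn hf.continuousOn
  obtain ⟨M1, hM1⟩ := hKc.exists_bound_of_continuousOn hG1.continuousOn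
  obtain ⟨M2, hM2⟩ := hKc.exists_bound_of_continuousOn (E := Ep n →L[ℝ] Ep n →L[ℝ] ℝ) hG2
  have hEq : ∀ y ∈ ball (0 : Ep n) 1, fderiv ℝ f y = G y := by
    intro y hy
    exact (fderivWithin_of_mem_nhds (Filter.mem_of_superset (isOpen_ball.mem_nhds hy)
      ball_subset_closedBall)).symm
  refine ⟨M0 + M1 + M2, ?_⟩
  rintro _ ⟨⟨y, hy⟩, rfl⟩
  have h1 : ‖fderiv ℝ f y‖ ≤ M1 := by
    by_cases hd : DifferentiableAt ℝ f y
    · rw [← hd.fderivWithin (hKu y hy)]; exact hM1 y hy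
    · rw [fderiv_zero_of_not_differentiableAt hd, norm_zero]
      exact (norm_nonneg _).trans (hM1 y hy)
  have h2 : ‖fderiv ℝ (fderiv ℝ f) y‖ ≤ M2 := by
    by_cases hd : DifferentiableAt ℝ (fderiv ℝ f) y
    · have hGd : HasFDerivWithinAt G (fderivWithin ℝ G K y) (ball 0 1) y :=
        ((hG1.differentiableOn (by norm_num)) y hy).hasFDerivWithinAt.mono ball_subset_closedBall
      -- differentiability of `fderiv ℝ f` at `y` forces its value there to be the limit from the ball
      have hval : G y = fderiv ℝ f y := by
        have hne : (nhdsWithin y (ball (0 : Ep n) 1)).NeBot :=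
          mem_closure_iff_nhdsWithin_neBot.1 (by rw [closure_ball _ one_ne_zero]; exact hy)
        refine tendsto_nhds_unique (hGd.continuousWithinAt) ?_
        refine (hd.continuousAt.continuousWithinAt (s := ball (0 : Ep n) 1)).tendsto.congr' ?_
        filter_upwards [self_mem_nhdsWithin] with z hz using hEq z hz
      have hFd : HasFDerivWithinAt G (fderiv ℝ (fderiv ℝ f) y) (ball 0 1) y :=
        hd.hasFDerivAt.hasFDerivWithinAt.congr (fun z hz => (hEq z hz).symm) hval
      rw [(hBu y hy).eq hFd hGd]; exact hM2 y hy
    · rw [fderiv_zero_of_not_differentiableAt hd]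
      exact (norm_zero (E := Ep n →L[ℝ] Ep n →L[ℝ] ℝ)).le.trans
        ((norm_nonneg _).trans (hM2 y hy))
  have h0 : ‖f y‖ ≤ M0 := hM0 y hy
  show ‖f y‖ + ‖fderiv ℝ f y‖ + ‖fderiv ℝ (fderiv ℝ f) y‖ ≤ M0 + M1 + M2
  linarith

lemma C2norm_nonneg (n : ℕ) (f : Ep n → ℝ) : 0 ≤ C2norm n f :=
  Real.iSup_nonneg fun _ => by positivity

lemma contDiffAt_of_norm_lt {n : ℕ} {f : Ep n → ℝ} (hf : ContDiffOn ℝ 2 f (closedBall 0 1))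
    {y : Ep n} (hy : ‖y‖ < 1) : ContDiffAt ℝ 2 f y :=
  hf.contDiffAt (Filter.mem_of_superset (isOpen_ball.mem_nhds (by simpa using hy))
    ball_subset_closedBall)

lemma norm_hess_le {n : ℕ} {f : Ep n → ℝ} (hf : ContDiffOn ℝ 2 f (closedBall 0 1))
    {y : Ep n} (hy : ‖y‖ < 1) : ‖fderiv ℝ (fderiv ℝ f) y‖ ≤ C2norm n f := by
  have h := le_ciSup (C2norm_bddAbove n f hf) ⟨y, by simpa using hy.le⟩
  refine le_trans ?_ h
  have h1 := norm_nonneg (f y)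
  have h2 := norm_nonneg (fderiv ℝ f y)
  show _ ≤ ‖f y‖ + ‖fderiv ℝ f y‖ + ‖fderiv ℝ (fderiv ℝ f) y‖
  linarith

/-- Flatness at the origin and the Hessian bound give linear growth of the gradient. -/
lemma norm_grad_le {n : ℕ} {f : Ep n → ℝ} (hf : ContDiffOn ℝ 2 f (closedBall 0 1))
    (h0 : fderiv ℝ f 0 = 0) {y : Ep n} (hy : ‖y‖ < 1) :
    ‖fderiv ℝ f y‖ ≤ C2norm n f * ‖y‖ := by
  have h := (convex_ball (0 : Ep n) 1).norm_image_sub_le_of_norm_fderiv_le (𝕜 := ℝ)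
    (f := fderiv ℝ f) (C := C2norm n f) (x := 0) (y := y)
    (fun z hz => ((contDiffAt_of_norm_lt hf (by simpa using hz)).fderiv_right
      (m := 1) (by norm_num)).differentiableAt (by norm_num))
    (fun z hz => norm_hess_le hf (by simpa using hz)) (by simp) (by simpa using hy)
  simpa [h0] using h

/-! ### First and second derivatives of `ū` -/

/-- The quotient rule for `ū`, in an arbitrary direction `(w, s)`. -/
lemma fderiv_ubar_apply {n : ℕ} {ε : ℝ} {h1 h2 : Ep n → ℝ} {y : Efull n}
    (hd1 : DifferentiableAt ℝ h1 y.1) (hd2 : DifferentiableAt ℝ h2 y.1)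
    (hδ : ε + h1 y.1 - h2 y.1 ≠ 0) (w : Ep n) (s : ℝ) :
    fderiv ℝ (ubar n ε h1 h2) y (w, s) =
      ((s - fderiv ℝ h2 y.1 w) * (ε + h1 y.1 - h2 y.1)
        - (y.2 - h2 y.1 + ε/2) * (fderiv ℝ h1 y.1 w - fderiv ℝ h2 y.1 w))
        / (ε + h1 y.1 - h2 y.1)^2 := by
  have hF : DifferentiableAt ℝ (ubar n ε h1 h2) y := by
    unfold ubar
    fun_prop (disch := assumption)
  have l1 := hd1.hasFDerivAt.hasLineDerivAt w
  have l2 := hd2.hasFDerivAt.hasLineDerivAt w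
  have l3 : HasDerivAt (fun t : ℝ => y.2 + t * s) s 0 := by
    simpa using ((hasDerivAt_id (0:ℝ)).mul_const s).const_add y.2
  have key := ((l3.fun_sub l2).add_const (ε/2)).fun_div ((l1.const_add ε).fun_sub l2) (by simpa using hδ)
  refine HasDerivAt.unique (hF.hasFDerivAt.hasLineDerivAt (w, s)) ?_
  simpa [ubar] using key

/-- The second directional derivatives of `ū`: first along `(w, s)`, then along `(v, r)`. -/
lemma fderiv_fderiv_ubar_apply {n : ℕ} {ε : ℝ} {h1 h2 : Ep n → ℝ}
    (hc1 : ContDiffOn ℝ 2 h1 (closedBall 0 1)) (hc2 : ContDiffOn ℝ 2 h2 (closedBall 0 1))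
    (hδ : ∀ y : Ep n, ‖y‖ < 1 → ε + h1 y - h2 y ≠ 0)
    {x : Efull n} (hx : ‖x.1‖ < 1) (w v : Ep n) (s r : ℝ) :
    fderiv ℝ (fun y => fderiv ℝ (ubar n ε h1 h2) y (w, s)) x (v, r) =
      (((-(fderiv ℝ (fderiv ℝ h2) x.1 v w)) * (ε + h1 x.1 - h2 x.1)
          + (s - fderiv ℝ h2 x.1 w) * (fderiv ℝ h1 x.1 v - fderiv ℝ h2 x.1 v)
        - ((r - fderiv ℝ h2 x.1 v) * (fderiv ℝ h1 x.1 w - fderiv ℝ h2 x.1 w)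
          + (x.2 - h2 x.1 + ε/2) *
            (fderiv ℝ (fderiv ℝ h1) x.1 v w - fderiv ℝ (fderiv ℝ h2) x.1 v w)))
          * (ε + h1 x.1 - h2 x.1)^2
        - ((s - fderiv ℝ h2 x.1 w) * (ε + h1 x.1 - h2 x.1)
          - (x.2 - h2 x.1 + ε/2) * (fderiv ℝ h1 x.1 w - fderiv ℝ h2 x.1 w))
          * (2 * (ε + h1 x.1 - h2 x.1) * (fderiv ℝ h1 x.1 v - fderiv ℝ h2 x.1 v)))
        / ((ε + h1 x.1 - h2 x.1)^2)^2 := by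
  have hev : (fun y => fderiv ℝ (ubar n ε h1 h2) y (w, s)) =ᶠ[nhds x] fun y =>
      ((s - fderiv ℝ h2 y.1 w) * (ε + h1 y.1 - h2 y.1)
        - (y.2 - h2 y.1 + ε/2) * (fderiv ℝ h1 y.1 w - fderiv ℝ h2 y.1 w))
        / (ε + h1 y.1 - h2 y.1)^2 := by
    have : ∀ᶠ y : Efull n in nhds x, ‖y.1‖ < 1 :=
      (continuous_fst.norm.continuousAt (x := x)).eventually_lt continuousAt_const hx
    filter_upwards [this] with y hy
    exact fderiv_ubar_apply ((contDiffAt_of_norm_lt hc1 hy).differentiableAt (by norm_num))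
      ((contDiffAt_of_norm_lt hc2 hy).differentiableAt (by norm_num)) (hδ _ hy) w s
  rw [hev.fderiv_eq]
  have c1 := contDiffAt_of_norm_lt hc1 hx
  have c2 := contDiffAt_of_norm_lt hc2 hx
  have d1 : DifferentiableAt ℝ h1 x.1 := c1.differentiableAt (by norm_num)
  have d2 : DifferentiableAt ℝ h2 x.1 := c2.differentiableAt (by norm_num)
  have e1 : DifferentiableAt ℝ (fderiv ℝ h1) x.1 :=
    (c1.fderiv_right (m := 1) (by norm_num)).differentiableAt (by norm_num)
  have e2 : DifferentiableAt ℝ (fderiv ℝ h2) x.1 :=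
    (c2.fderiv_right (m := 1) (by norm_num)).differentiableAt (by norm_num)
  have hδ2 : (ε + h1 x.1 - h2 x.1)^2 ≠ 0 := pow_ne_zero 2 (hδ _ hx)
  have hF : DifferentiableAt ℝ (fun y : Efull n =>
      ((s - fderiv ℝ h2 y.1 w) * (ε + h1 y.1 - h2 y.1)
        - (y.2 - h2 y.1 + ε/2) * (fderiv ℝ h1 y.1 w - fderiv ℝ h2 y.1 w))
        / (ε + h1 y.1 - h2 y.1)^2) x := by
    have e1' : DifferentiableAt ℝ (fun y : Efull n => fderiv ℝ h1 y.1 w) x :=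
      (e1.comp x differentiableAt_fst).clm_apply (differentiableAt_const w)
    have e2' : DifferentiableAt ℝ (fun y : Efull n => fderiv ℝ h2 y.1 w) x :=
      (e2.comp x differentiableAt_fst).clm_apply (differentiableAt_const w)
    fun_prop (disch := assumption)
  have l1 := d1.hasFDerivAt.hasLineDerivAt v
  have l2 := d2.hasFDerivAt.hasLineDerivAt v
  have m1 : HasDerivAt (fun t : ℝ => fderiv ℝ h1 (x.1 + t • v) w)
      (fderiv ℝ (fderiv ℝ h1) x.1 v w) 0 := by
    have := HasDerivAt.clm_apply (e1.hasFDerivAt.hasLineDerivAt v) (hasDerivAt_const (0:ℝ) w)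
    simpa using this
  have m2 : HasDerivAt (fun t : ℝ => fderiv ℝ h2 (x.1 + t • v) w)
      (fderiv ℝ (fderiv ℝ h2) x.1 v w) 0 := by
    have := HasDerivAt.clm_apply (e2.hasFDerivAt.hasLineDerivAt v) (hasDerivAt_const (0:ℝ) w)
    simpa using this
  have l3 : HasDerivAt (fun t : ℝ => x.2 + t * r) r 0 := by
    simpa using ((hasDerivAt_id (0:ℝ)).mul_const r).const_add x.2
  have lδ := (l1.const_add ε).fun_sub l2
  have key := (((m2.const_sub s).fun_mul lδ).fun_sub
    (((l3.fun_sub l2).add_const (ε/2)).fun_mul (m1.fun_sub m2))).fun_div (lδ.fun_pow 2) (by simpa using hδ2)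
  refine HasDerivAt.unique (hF.hasFDerivAt.hasLineDerivAt (v, r)) ?_
  simpa using key

/-! ### The estimates -/

lemma abs_apply_single_le {n : ℕ} (L : Ep n →L[ℝ] ℝ) (α : Fin (n - 1)) :
    |L (EuclideanSpace.single α 1)| ≤ ‖L‖ := by
  simpa using L.le_opNorm (EuclideanSpace.single α (1:ℝ))

lemma abs_apply_single_single_le {n : ℕ} (L : Ep n →L[ℝ] Ep n →L[ℝ] ℝ) (α β : Fin (n - 1)) :
    |L (EuclideanSpace.single α 1) (EuclideanSpace.single β 1)| ≤ ‖L‖ :=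
  (abs_apply_single_le _ β).trans (by simpa using L.le_opNorm (EuclideanSpace.single α (1:ℝ)))

/-- The arithmetic of the tangential estimate: `d` stands for the gap `δ`, `t` for the height above
the lower graph, `ρ` for `|x'|`, and `a`, `b`, `p` for first and second derivatives of the `h_i`. -/
lemma tangential_bound {κ C₀ e ρ d t a1 a2 b1 b2 p1 p2 : ℝ} (hκ : 0 < κ) (hC : 1 ≤ C₀)
    (he : 0 < e) (hd : (e + ρ^2) / C₀ ≤ d) (ht0 : 0 ≤ t) (htd : t ≤ d) (hρ : 0 ≤ ρ)
    (ha2 : |a2| ≤ κ * ρ) (hb2 : |b2| ≤ κ * ρ) (ha : |a1 - a2| ≤ κ * ρ) (hb : |b1 - b2| ≤ κ * ρ)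
    (hp2 : |p2| ≤ κ) (hp : |p1 - p2| ≤ κ) :
    |((-p2 * d + (0 - b2) * (a1 - a2) - ((0 - a2) * (b1 - b2) + t * (p1 - p2))) * d^2
      - ((0 - b2) * d - t * (b1 - b2)) * (2 * d * (a1 - a2))) / (d^2)^2|
      ≤ ((2 * κ + 4 * κ^2 * C₀) * C₀) / (e + ρ^2) := by
  have hC0 : 0 < C₀ := by linarith
  have hs : 0 < e + ρ^2 := by positivity
  have hdpos : 0 < d := lt_of_lt_of_le (by positivity) hd
  have hsd : e + ρ^2 ≤ C₀ * d := by rw [div_le_iff₀ hC0] at hd; linarith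
  have hid : ((-p2 * d + (0 - b2) * (a1 - a2) - ((0 - a2) * (b1 - b2) + t * (p1 - p2))) * d^2
      - ((0 - b2) * d - t * (b1 - b2)) * (2 * d * (a1 - a2))) / (d^2)^2
      = (-p2 + (b2 * (a1 - a2) + a2 * (b1 - b2)) / d - (t / d) * (p1 - p2)
        + 2 * (t / d) * ((b1 - b2) * (a1 - a2)) / d) / d := by
    field_simp
    ring
  have hτ : |t / d| ≤ 1 := by
    rw [abs_of_nonneg (by positivity)]; exact (div_le_one hdpos).2 htd
  have hprod : ∀ u v : ℝ, |u| ≤ κ * ρ → |v| ≤ κ * ρ → |u * v / d| ≤ κ^2 * C₀ := by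
    intro u v hu hv
    rw [abs_div, abs_of_pos hdpos, div_le_iff₀ hdpos, abs_mul]
    calc |u| * |v| ≤ (κ * ρ) * (κ * ρ) := by gcongr
      _ = κ^2 * ρ^2 := by ring
      _ ≤ κ^2 * (C₀ * d) := by gcongr; linarith
      _ = κ^2 * C₀ * d := by ring
  have q1 := hprod _ _ hb2 ha
  have q2 := hprod _ _ ha2 hb
  have q3 := hprod _ _ hb ha
  have q4 : |t / d * (p1 - p2)| ≤ κ := by
    rw [abs_mul]
    calc |t / d| * |p1 - p2| ≤ 1 * κ := by gcongr
      _ = κ := one_mul _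
  have q5 : |t / d * ((b1 - b2) * (a1 - a2) / d)| ≤ κ^2 * C₀ := by
    rw [abs_mul]
    calc |t / d| * |(b1 - b2) * (a1 - a2) / d| ≤ 1 * (κ^2 * C₀) := by gcongr
      _ = _ := one_mul _
  rw [hid, abs_div, abs_of_pos hdpos, div_le_div_iff₀ hdpos hs]
  have hnum : |-p2 + (b2 * (a1 - a2) + a2 * (b1 - b2)) / d - (t / d) * (p1 - p2)
        + 2 * (t / d) * ((b1 - b2) * (a1 - a2)) / d| ≤ 2 * κ + 4 * κ^2 * C₀ := by
    have : -p2 + (b2 * (a1 - a2) + a2 * (b1 - b2)) / d - (t / d) * (p1 - p2)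
        + 2 * (t / d) * ((b1 - b2) * (a1 - a2)) / d
        = -p2 + b2 * (a1 - a2) / d + a2 * (b1 - b2) / d - (t / d) * (p1 - p2)
          + 2 * (t / d * ((b1 - b2) * (a1 - a2) / d)) := by ring
    rw [this]
    rw [abs_le] at *
    constructor <;> linarith [hp2.1, hp2.2, q1.1, q1.2, q2.1, q2.2, q4.1, q4.2, q5.1, q5.2]
  calc _ ≤ (2 * κ + 4 * κ^2 * C₀) * (C₀ * d) := by gcongr
    _ = _ := by ring

/-- The arithmetic of the mixed estimate for `∂_α ∂_n ū = -∂_α δ / δ²`. -/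
lemma mixed_bound {κ C₀ e ρ d a : ℝ} (hC : 1 ≤ C₀) (he : 0 < e)
    (hd : (e + ρ^2) / C₀ ≤ d) (ha : |a| ≤ κ * ρ) :
    |-a / d^2| ≤ (κ * C₀^2) * ρ / (e + ρ^2)^2 := by
  have hC0 : 0 < C₀ := by linarith
  have hs : 0 < e + ρ^2 := by positivity
  have hdpos : 0 < d := lt_of_lt_of_le (by positivity) hd
  have hsd : e + ρ^2 ≤ C₀ * d := by rw [div_le_iff₀ hC0] at hd; linarith
  rw [abs_div, abs_neg, abs_of_pos (pow_pos hdpos 2), div_le_div_iff₀ (by positivity) (by positivity)]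
  calc |a| * (e + ρ^2)^2 ≤ (κ * ρ) * (C₀ * d)^2 := by
        have := (abs_nonneg a).trans ha
        gcongr
    _ = _ := by ring

theorem stmt7 (n : ℕ) (hn : 2 ≤ n) (κ1 C₀ : ℝ) (hκ1 : 0 < κ1) (hC₀ : 1 ≤ C₀) :
    ∃ C : ℝ, 0 < C ∧
      ∀ κ0 : ℝ, 0 < κ0 → ∀ ε ∈ Set.Ioo (0:ℝ) 1, ∀ h1 h2 : Ep n → ℝ,
        HGeom n ε κ0 κ1 h1 h2 → DeltaComp n ε C₀ h1 h2 →
        ∀ x ∈ Omega n ε h1 h2 1, ∀ α β : Fin (n - 1),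
          |fderiv ℝ (fun y => fderiv ℝ (ubar n ε h1 h2) y (tang n β)) x (tang n α)| ≤
            C / (ε + ‖x.1‖^2) ∧
          |fderiv ℝ (fun y => fderiv ℝ (ubar n ε h1 h2) y (vert n)) x (tang n α)| ≤
            C * ‖x.1‖ / (ε + ‖x.1‖^2)^2 ∧
          fderiv ℝ (fun y => fderiv ℝ (ubar n ε h1 h2) y (vert n)) x (vert n) = 0 := by
  refine ⟨(2 * κ1 + 4 * κ1^2 * C₀) * C₀ + κ1 * C₀^2, by positivity, ?_⟩
  rintro κ0 - ε ⟨hε, -⟩ h1 h2 ⟨hc1, hc2, hgap, -, -, hg1, hg2, -, hnorm⟩ hcomp x ⟨hx, hlo, hhi⟩ α β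
  have hδ : ∀ y : Ep n, ‖y‖ < 1 → ε + h1 y - h2 y ≠ 0 := fun y hy => by
    have := hgap y hy.le
    linarith
  have hd := (hcomp x.1 hx.le).1
  have hn1 := C2norm_nonneg n h1
  have hn2 := C2norm_nonneg n h2
  have hρ := norm_nonneg x.1
  have g1 := norm_grad_le hc1 hg1 hx
  have g2 := norm_grad_le hc2 hg2 hx
  have H1 := norm_hess_le hc1 hx
  have H2 := norm_hess_le hc2 hx
  have hsum : C2norm n h1 * ‖x.1‖ + C2norm n h2 * ‖x.1‖ ≤ κ1 * ‖x.1‖ := by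
    rw [← add_mul]; gcongr
  have hpos1 : 0 ≤ C2norm n h1 * ‖x.1‖ := by positivity
  have grad2 : ∀ i, |fderiv ℝ h2 x.1 (EuclideanSpace.single i 1)| ≤ κ1 * ‖x.1‖ := fun i =>
    (abs_apply_single_le _ i).trans (by linarith)
  have gradδ : ∀ i, |fderiv ℝ h1 x.1 (EuclideanSpace.single i 1)
      - fderiv ℝ h2 x.1 (EuclideanSpace.single i 1)| ≤ κ1 * ‖x.1‖ := fun i =>
    (abs_sub _ _).trans (by
      have := abs_apply_single_le (fderiv ℝ h1 x.1) i
      have := abs_apply_single_le (fderiv ℝ h2 x.1) i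
      linarith)
  have hs : 0 < ε + ‖x.1‖^2 := by positivity
  refine ⟨?_, ?_, ?_⟩
  · unfold tang
    rw [fderiv_fderiv_ubar_apply hc1 hc2 hδ hx]
    have hessδ := abs_sub (fderiv ℝ (fderiv ℝ h1) x.1 (EuclideanSpace.single α 1)
      (EuclideanSpace.single β 1)) (fderiv ℝ (fderiv ℝ h2) x.1 (EuclideanSpace.single α 1)
      (EuclideanSpace.single β 1))
    have p1 := abs_apply_single_single_le (fderiv ℝ (fderiv ℝ h1) x.1) α β
    have p2 := abs_apply_single_single_le (fderiv ℝ (fderiv ℝ h2) x.1) α β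
    refine (tangential_bound hκ1 hC₀ hε hd (by linarith) (by linarith) hρ (grad2 α) (grad2 β)
      (gradδ α) (gradδ β) (by linarith) (by linarith)).trans ?_
    gcongr
    linarith [show 0 ≤ κ1 * C₀^2 by positivity]
  · unfold tang vert
    rw [fderiv_fderiv_ubar_apply hc1 hc2 hδ hx]
    have hδx := hδ x.1 hx
    have := mixed_bound hC₀ hε hd (gradδ α)
    refine le_trans (le_of_eq ?_) (this.trans ?_)
    · congr 1
      simp only [map_zero]
      field_simp
      ring
    · gcongr
      linarith [show 0 ≤ (2 * κ1 + 4 * κ1^2 * C₀) * C₀ by positivity]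
  · unfold vert
    rw [fderiv_fderiv_ubar_apply hc1 hc2 hδ hx]
    simp
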